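/- Let K = ℚ(q), let L_n be the Laurent polynomial ring over K in n variables (the group algebra of ℤ^n over K) with fraction field F_n, and let S_n act by permuting the variables. For every λ ∈ ℤ^n, the element P_λ := ∑_{σ∈S_n} σ( z^λ · ∏_{1≤i<j≤n} (1 − q⁻¹ z_i z_j⁻¹)·(1 − z_i z_j⁻¹)⁻¹ ) of F_n lies in (the image in F_n of) the Laurent polynomial ring L_n, and it is invariant under the action of S_n. -/

import Mathlib

noncomputable section

set_option synthInstance.maxHeartbeats 1000000

namespace InverseSatake

/-- The field `K = ℚ(q)` of rational functions over `ℚ`. -/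
abbrev K : Type := RatFunc ℚ

/-- The variable `q` of `K = ℚ(q)`. -/
abbrev q : K := RatFunc.X

/-- `L_n`: the Laurent polynomial ring over `K` in `n` variables, i.e. the group algebra
of `ℤ^n` over `K`. -/
abbrev Lau (n : ℕ) : Type := AddMonoidAlgebra K (Fin n → ℤ)

instance (n : ℕ) : IsDomain (Lau n) := NoZeroDivisors.to_isDomain _

/-- `F_n`: the field of fractions of `L_n`. -/
abbrev FF (n : ℕ) : Type _ := FractionRing (Lau n)

instance (n : ℕ) : Field (FF n) := inferInstance

variable {n : ℕ}

/-- The action of `σ ∈ S_n` on exponent vectors: `(σ·λ)ᵢ = λ_{σ⁻¹(i)}`. -/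
def permAddEquiv (σ : Equiv.Perm (Fin n)) : (Fin n → ℤ) ≃+ (Fin n → ℤ) where
  toFun v := v ∘ σ.symm
  invFun v := v ∘ σ
  left_inv v := by ext i; simp
  right_inv v := by ext i; simp
  map_add' v w := rfl

/-- The action of `S_n` on `L_n` by permuting the variables. -/
def actL (σ : Equiv.Perm (Fin n)) : Lau n ≃ₐ[K] Lau n :=
  AddMonoidAlgebra.domCongr K K (permAddEquiv σ)

/-- The action of `S_n` on `F_n` by permuting the variables. -/
def actF (σ : Equiv.Perm (Fin n)) : FF n ≃+* FF n :=
  IsFractionRing.ringEquivOfRingEquiv (actL σ).toRingEquiv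

/-- The exponent vector of the Laurent monomial `zᵢ z_j⁻¹`. -/
def eu (i j : Fin n) : Fin n → ℤ := Pi.single i 1 - Pi.single j 1

/-- The canonical embedding `L_n → F_n`. -/
def alg : Lau n →+* FF n := algebraMap (Lau n) (FF n)

/-- `P_λ = ∑_{σ ∈ S_n} σ( z^λ ∏_{i<j} (1 − q⁻¹ zᵢzⱼ⁻¹)(1 − zᵢzⱼ⁻¹)⁻¹ ) ∈ F_n`
(Macdonald's formula for the group `GL_n`). -/
def Pfun (lam : Fin n → ℤ) : FF n :=
  ∑ σ : Equiv.Perm (Fin n),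
    actF σ (alg (AddMonoidAlgebra.single lam 1) *
      ∏ i : Fin n, ∏ j ∈ Finset.Ioi i,
        (alg (1 - AddMonoidAlgebra.single (eu i j) q⁻¹)
          * (alg (1 - AddMonoidAlgebra.single (eu i j) 1))⁻¹))

/-!
Since `∏_{i<j} zⱼ · ∏_{i<j} (1 - zᵢzⱼ⁻¹)` is the Vandermonde determinant `V` of the variables, each
summand of `P_λ` is `σ(G / V)` for one Laurent polynomial `G`. As `σ V = sign σ · V`, the sum is the
antisymmetrization of `G` divided by `V`. The antisymmetrization of a monomial `z^v` is
`det (zᵢ ^ vⱼ)`, which `V` divides: once a power `zᵢ ^ c` is taken out of each row `i`, the columns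
are values of polynomials at the points `zᵢ`, and reducing these modulo `∏ᵢ (X - zᵢ)` factors the
matrix through the Vandermonde matrix. Invariance is a reindexing of the sum over the group.
-/

section Vandermonde

open Polynomial

variable {R : Type*} [CommRing R]

theorem det_vandermonde_dvd_det_eval (z : Fin n → R) (p : Fin n → R[X]) :
    (Matrix.vandermonde z).det ∣ (Matrix.of fun i j => (p j).eval (z i)).det := by
  nontriviality R
  set f : R[X] := ∏ i, (X - C (z i)) with hf
  have f_monic : f.Monic := monic_prod_X_sub_C z Finset.univ
  have degree_mod (j : Fin n) : (p j %ₘ f).degree < n := by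
    have degree_f : f.degree = n := by
      rw [degree_eq_natDegree f_monic.ne_zero, hf, natDegree_finsetProd_X_sub_C_eq_card]
      simp
    exact degree_f ▸ degree_modByMonic_lt _ f_monic
  have eval_mod (i j : Fin n) : (p j).eval (z i) = (p j %ₘ f).eval (z i) := by
    have root : f.eval (z i) = 0 := by
      rw [hf, eval_prod]
      exact Finset.prod_eq_zero (Finset.mem_univ i) (by simp)
    exact (eval₂_modByMonic_eq_self_of_root root).symm
  have factorization : (Matrix.of fun i j => (p j).eval (z i)) =
      Matrix.vandermonde z * Matrix.of fun k j : Fin n => (p j %ₘ f).coeff k := by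
    ext i j
    simp only [Matrix.of_apply, Matrix.mul_apply, Matrix.vandermonde_apply]
    rw [eval_mod, eval_eq_sum, ← sum_fin (fun e a => a * z i ^ e) (by simp) (degree_mod j)]
    exact Finset.sum_congr rfl fun k _ => mul_comm _ _
  rw [factorization, Matrix.det_mul]
  exact dvd_mul_right _ _

theorem det_vandermonde_dvd_det_zpow (u : Fin n → Rˣ) (v : Fin n → ℤ) :
    (Matrix.vandermonde fun i => (u i : R)).det ∣
      (Matrix.of fun i j => ((u i ^ v j : Rˣ) : R)).det := by
  obtain ⟨c, hc⟩ := (Set.finite_range v).bddBelow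
  have zpow_eq (i j : Fin n) : u i ^ v j = u i ^ c * u i ^ (v j - c).toNat := by
    rw [← zpow_natCast, ← zpow_add, Int.toNat_of_nonneg (sub_nonneg.2 (hc ⟨j, rfl⟩)),
      add_sub_cancel]
  have det_eq : (Matrix.of fun i j => ((u i ^ v j : Rˣ) : R)).det =
      (∏ i, ((u i ^ c : Rˣ) : R)) *
        (Matrix.of fun i j => (X ^ (v j - c).toNat : R[X]).eval (u i : R)).det := by
    rw [← Matrix.det_mul_column]
    congr 1
    ext i j
    simp [zpow_eq]
  rw [det_eq]
  exact (det_vandermonde_dvd_det_eval _ _).mul_left _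

end Vandermonde

open scoped AddMonoidAlgebra
open AddMonoidAlgebra (single)

section LaurentPolynomials

variable (R : Type*) [CommRing R]

/-- The action of `S_n` on the Laurent polynomials over an arbitrary coefficient ring `R` by
permuting the variables; `actL` is the case `R = K`. -/
def permVars : Equiv.Perm (Fin n) →* (R[Fin n → ℤ] ≃ₐ[R] R[Fin n → ℤ]) where
  toFun σ := AddMonoidAlgebra.domCongr R R (permAddEquiv σ)
  map_one' := AddMonoidAlgebra.domCongr_refl
  map_mul' σ τ := (AddMonoidAlgebra.trans_domCongr_domCongr (permAddEquiv τ) (permAddEquiv σ)).symm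

/-- The variable `zᵢ`, as a unit of the Laurent polynomial ring so that it has integer powers. -/
def var (i : Fin n) : R[Fin n → ℤ]ˣ :=
  (AddMonoidAlgebra.of R (Fin n → ℤ)).toHomUnits (Multiplicative.ofAdd (Pi.single i 1))

/-- The Vandermonde determinant of the variables. -/
def varVandermonde (n : ℕ) : R[Fin n → ℤ] :=
  (Matrix.vandermonde fun i : Fin n => (var R i : R[Fin n → ℤ])).det

/-- The denominator `∏_{i<j} (1 - zᵢzⱼ⁻¹)` of Macdonald's formula. -/
def weylDenominator (n : ℕ) : R[Fin n → ℤ] :=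
  ∏ i : Fin n, ∏ j ∈ Finset.Ioi i, (1 - single (eu i j) 1)

/-- The monomial `∏_{i<j} zⱼ` by which `varVandermonde` and `weylDenominator` differ, as a unit. -/
def vandermondeMonomial (n : ℕ) : R[Fin n → ℤ]ˣ :=
  ∏ i : Fin n, ∏ j ∈ Finset.Ioi i, var R j

/-- The antisymmetrization `g ↦ ∑_σ sign(σ) σ(g)`, without the factor `1 / n!`. -/
def antisymmetrize : R[Fin n → ℤ] →ₗ[R] R[Fin n → ℤ] :=
  ∑ σ : Equiv.Perm (Fin n), Equiv.Perm.sign σ • (permVars R σ).toLinearMap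

theorem antisymmetrize_apply (g : R[Fin n → ℤ]) :
    antisymmetrize R g = ∑ σ : Equiv.Perm (Fin n), Equiv.Perm.sign σ • permVars R σ g := by
  simp [antisymmetrize]

theorem permVars_single (σ : Equiv.Perm (Fin n)) (v : Fin n → ℤ) (a : R) :
    permVars R σ (single v a) = single (v ∘ σ.symm) a :=
  AddMonoidAlgebra.domCongr_single ..

theorem val_var_zpow (i : Fin n) (k : ℤ) :
    ((var R i ^ k : R[Fin n → ℤ]ˣ) : R[Fin n → ℤ]) = single (Pi.single i k) 1 := by
  rw [var, ← map_zpow, ← ofAdd_zsmul, ← Pi.single_smul, smul_eq_mul, mul_one]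
  rfl

theorem val_var (i : Fin n) : (var R i : R[Fin n → ℤ]) = single (Pi.single i 1) 1 := rfl

theorem prod_var_zpow (v : Fin n → ℤ) :
    ∏ i, ((var R i ^ v i : R[Fin n → ℤ]ˣ) : R[Fin n → ℤ]) = single v 1 := by
  simp_rw [val_var_zpow, AddMonoidAlgebra.prod_single, Finset.univ_sum_single,
    Finset.prod_const_one]

theorem var_injective [Nontrivial R] :
    Function.Injective fun i : Fin n => (var R i : R[Fin n → ℤ]) := by
  intro i j h
  have exponent_eq : (Pi.single i 1 : Fin n → ℤ) = Pi.single j 1 :=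
    AddMonoidAlgebra.single_left_injective one_ne_zero h
  by_contra hij
  simpa [hij] using congrFun exponent_eq i

theorem permVars_var_zpow (σ : Equiv.Perm (Fin n)) (i : Fin n) (k : ℤ) :
    permVars R σ ((var R i ^ k : R[Fin n → ℤ]ˣ) : R[Fin n → ℤ]) =
      ((var R (σ i) ^ k : R[Fin n → ℤ]ˣ) : R[Fin n → ℤ]) := by
  rw [val_var_zpow, val_var_zpow, permVars_single, Pi.single_comp_equiv, Equiv.symm_symm]

theorem permVars_varVandermonde (σ : Equiv.Perm (Fin n)) :
    permVars R σ (varVandermonde R n) = Equiv.Perm.sign σ • varVandermonde R n := by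
  have permVars_var (i : Fin n) : permVars R σ (var R i : R[Fin n → ℤ]) = var R (σ i) := by
    simpa using permVars_var_zpow R σ i 1
  rw [varVandermonde, Units.smul_def, zsmul_eq_mul, ← Matrix.det_permute, AlgEquiv.map_det]
  congr 1
  ext i j
  simp [permVars_var]

theorem antisymmetrize_single_one (v : Fin n → ℤ) :
    antisymmetrize R (single v 1) =
      (Matrix.of fun i j => ((var R i ^ v j : R[Fin n → ℤ]ˣ) : R[Fin n → ℤ])).det := by
  rw [antisymmetrize_apply, Matrix.det_apply, ← prod_var_zpow]
  simp only [map_prod, permVars_var_zpow, Matrix.of_apply]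

theorem varVandermonde_dvd_antisymmetrize (g : R[Fin n → ℤ]) :
    varVandermonde R n ∣ antisymmetrize R g := by
  induction g using AddMonoidAlgebra.induction_linear with
  | zero => simp
  | add f g hf hg => simpa using dvd_add hf hg
  | single v a =>
    have single_eq_smul : (single v a : R[Fin n → ℤ]) = a • single v 1 := by simp
    rw [single_eq_smul, map_smul, antisymmetrize_single_one]
    exact dvd_smul_of_dvd a (det_vandermonde_dvd_det_zpow (var R) v)

theorem varVandermonde_eq_monomial_mul_weylDenominator :
    varVandermonde R n = vandermondeMonomial R n * weylDenominator R n := by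
  simp_rw [varVandermonde, Matrix.det_vandermonde, vandermondeMonomial, weylDenominator,
    Units.coe_prod, ← Finset.prod_mul_distrib]
  refine Finset.prod_congr rfl fun i _ => Finset.prod_congr rfl fun j _ => ?_
  rw [mul_sub, mul_one, val_var, val_var, AddMonoidAlgebra.single_mul_single, one_mul, eu,
    add_sub_cancel]

theorem varVandermonde_ne_zero [IsDomain R[Fin n → ℤ]] : varVandermonde R n ≠ 0 := by
  have : Nontrivial R := (algebraMap R R[Fin n → ℤ]).domain_nontrivial
  exact Matrix.det_vandermonde_ne_zero_iff.2 (var_injective R)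

end LaurentPolynomials

section FractionField

variable {R : Type*} [CommRing R] (F : Type*) [Field F] [Algebra R[Fin n → ℤ] F]

theorem algebraMap_div_weylDenominator (g : R[Fin n → ℤ]) :
    algebraMap _ F g / algebraMap _ F (weylDenominator R n) =
      algebraMap _ F (vandermondeMonomial R n * g) / algebraMap _ F (varVandermonde R n) := by
  rw [varVandermonde_eq_monomial_mul_weylDenominator, map_mul, map_mul,
    mul_div_mul_left _ _ ((Units.isUnit _).map (algebraMap _ F)).ne_zero]

variable [IsFractionRing R[Fin n → ℤ] F]

variable (R) in
/-- The action of `S_n` on a fraction field of the Laurent polynomial ring by permuting the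
variables; `actF` is the case `R = K`. -/
def permFrac : Equiv.Perm (Fin n) →* (F ≃+* F) where
  toFun σ := IsFractionRing.ringEquivOfRingEquiv (permVars R σ).toRingEquiv
  map_one' := by
    rw [map_one]
    exact IsFractionRing.ringEquivOfRingEquiv_refl
  map_mul' σ τ := by
    rw [map_mul]
    exact IsFractionRing.ringEquivOfRingEquiv_comp F F F
      (permVars R τ).toRingEquiv (permVars R σ).toRingEquiv

/-- The Weyl symmetrization `∑_σ σ(g / ∏_{i<j} (1 - zᵢzⱼ⁻¹))` of a Laurent polynomial `g`, of
which `P_λ` is a special case. -/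
def weylSum (g : R[Fin n → ℤ]) : F :=
  ∑ σ : Equiv.Perm (Fin n), permFrac R F σ
    (algebraMap _ F g / algebraMap _ F (weylDenominator R n))

theorem permFrac_algebraMap (σ : Equiv.Perm (Fin n)) (g : R[Fin n → ℤ]) :
    permFrac R F σ (algebraMap _ F g) = algebraMap _ F (permVars R σ g) :=
  IsFractionRing.ringEquivOfRingEquiv_algebraMap _ g

theorem permFrac_weylSum (σ : Equiv.Perm (Fin n)) (g : R[Fin n → ℤ]) :
    permFrac R F σ (weylSum F g) = weylSum F g := by
  rw [weylSum, map_sum]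
  refine Fintype.sum_equiv (Equiv.mulLeft σ) _ _ fun τ => ?_
  rw [Equiv.coe_mulLeft, map_mul, RingAut.mul_apply]

theorem permFrac_div_varVandermonde (σ : Equiv.Perm (Fin n)) (g : R[Fin n → ℤ]) :
    permFrac R F σ (algebraMap _ F g / algebraMap _ F (varVandermonde R n)) =
      algebraMap _ F (Equiv.Perm.sign σ • permVars R σ g) /
        algebraMap _ F (varVandermonde R n) := by
  rw [map_div₀, permFrac_algebraMap, permFrac_algebraMap, permVars_varVandermonde]
  rcases Int.units_eq_one_or (Equiv.Perm.sign σ) with h | h <;> simp [h, neg_div, div_neg]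

theorem weylSum_eq_antisymmetrize_div (g : R[Fin n → ℤ]) :
    weylSum F g =
      algebraMap _ F (antisymmetrize R ((vandermondeMonomial R n : R[Fin n → ℤ]) * g)) /
        algebraMap _ F (varVandermonde R n) := by
  simp_rw [weylSum, algebraMap_div_weylDenominator, permFrac_div_varVandermonde,
    ← Finset.sum_div, ← map_sum, antisymmetrize_apply]

theorem weylSum_mem_range_algebraMap (g : R[Fin n → ℤ]) :
    weylSum F g ∈ (algebraMap R[Fin n → ℤ] F).range := by
  have : IsDomain R[Fin n → ℤ] := (IsFractionRing.injective R[Fin n → ℤ] F).isDomain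
  have algebraMap_ne_zero : algebraMap _ F (varVandermonde R n) ≠ 0 :=
    (IsFractionRing.to_map_eq_zero_iff).not.2 (varVandermonde_ne_zero R)
  rw [weylSum_eq_antisymmetrize_div]
  obtain ⟨p, hp⟩ :=
    varVandermonde_dvd_antisymmetrize R ((vandermondeMonomial R n : R[Fin n → ℤ]) * g)
  exact ⟨p, by rw [hp, map_mul, mul_div_cancel_left₀ _ algebraMap_ne_zero]⟩

theorem Pfun_mem_laurent_and_invariant_general (g : R[Fin n → ℤ]) :
    (∃ p : R[Fin n → ℤ], algebraMap _ F p = weylSum F g) ∧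
      ∀ σ : Equiv.Perm (Fin n), permFrac R F σ (weylSum F g) = weylSum F g :=
  ⟨weylSum_mem_range_algebraMap F g, fun σ => permFrac_weylSum F σ g⟩

end FractionField

theorem Pfun_eq_weylSum (lam : Fin n → ℤ) :
    Pfun lam = weylSum (FF n)
      (single lam 1 * ∏ i : Fin n, ∏ j ∈ Finset.Ioi i, (1 - single (eu i j) q⁻¹) : Lau n) := by
  refine Finset.sum_congr rfl fun σ _ => congrArg (actF σ) ?_
  simp only [alg, weylDenominator, map_mul, map_prod, Finset.prod_mul_distrib,
    Finset.prod_inv_distrib, div_eq_mul_inv, mul_assoc]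

/-- For every `λ ∈ ℤ^n`, the element `P_λ` of `F_n` lies in (the image of) the Laurent
polynomial ring `L_n`, and it is invariant under the action of `S_n`. -/
theorem Pfun_mem_laurent_and_invariant (n : ℕ) (lam : Fin n → ℤ) :
    (∃ p : Lau n, alg p = Pfun lam) ∧
      ∀ σ : Equiv.Perm (Fin n), actF σ (Pfun lam) = Pfun lam := by
  rw [Pfun_eq_weylSum]
  exact Pfun_mem_laurent_and_invariant_general (FF n) _

end InverseSatake
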